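/- arXiv:1001.1314 — 2 statements merged into one kernel-verified Lean document; each statement's English description precedes it below -/
import Mathlib

section
/- (Coideal/comodule property.) Let H₁, H₂ be complex vector spaces. Let T(u) = Σ E_{ij} ⊗ t_{ij}(u), with t_{ij}(u) ∈ End(H₁), satisfy the RTT relation and have pointwise two-sided inverse T'(u); let D(u) = Σ E_{ij} ⊗ d_{ij}(u), with d_{ij}(u) ∈ End(H₂), satisfy the operator reflection equation. Define on ℂ^n ⊗ H₁ ⊗ H₂ the matrix D̃(u) = Σ_{i,j} E_{ij} ⊗ d̃_{ij}(u) with entries d̃_{ij}(u) = Σ_{a,b=1}^n t_{ia}(u)·t'_{bj}(−u) ⊗ d_{ab}(u) ∈ End(H₁ ⊗ H₂) (i.e. D̃(u) = T₍₁₎(u)·D₍₂₎(u)·T₍₁₎'(−u), where T acts on the auxiliary space and H₁ and D on the auxiliary space and H₂). Then D̃(u) satisfies the operator reflection equation on ℂ^n ⊗ ℂ^n ⊗ (H₁ ⊗ H₂). -/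
/-!
Extending `T` and `D` to `H₁ ⊗ H₂` by `f ↦ f ⊗ 1` and `g ↦ 1 ⊗ g` preserves the RTT relation and
the reflection equation, and afterwards the entries of `T`, `T'` commute with those of `D`. The
claim is then Sklyanin's dressing lemma `RefEq.dress` for `T(u) D(u) T'(-u)`. Writing indices for
the auxiliary spaces, that lemma uses RTT in the four forms

* `R(u₁-u₂) T₁(u₁) T₂(u₂) = T₂(u₂) T₁(u₁) R(u₁-u₂)`,
* `T₁'(-u₁) R(u₁+u₂) T₂(u₂) = T₂(u₂) R(u₁+u₂) T₁'(-u₁)`,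
* `T₂'(-u₂) R(u₁+u₂) T₁(u₁) = T₁(u₁) R(u₁+u₂) T₂'(-u₂)`,
* `R(u₁-u₂) T₁'(-u₁) T₂'(-u₂) = T₂'(-u₂) T₁'(-u₁) R(u₁-u₂)`,

the second and fourth of which need the symmetry `R₂₁ = R₁₂`, to bring the left-hand side to
`T₂ T₁ (R D₁ R D₂) T₁' T₂'`, to apply the reflection equation for `D`, and to undo the reordering.
-/

/-!
STATEMENT 7: the coideal/comodule property of the reflection algebra.
-/

open Matrix
open scoped Kronecker

noncomputable section

/-- The permutation operator `P = Σ_{i,j} E_{ij} ⊗ E_{ji}` on `ℂ^n ⊗ ℂ^n`. -/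
def Pmat (n : ℕ) : Matrix (Fin n × Fin n) (Fin n × Fin n) ℂ :=
  fun p q => if p.1 = q.2 ∧ p.2 = q.1 then 1 else 0

/-- The rational (XXX) R-matrix `R(u) = u·(I⊗I) − ħ·P`. -/
def Rmat (n : ℕ) (hbar u : ℂ) : Matrix (Fin n × Fin n) (Fin n × Fin n) ℂ :=
  u • (1 : Matrix (Fin n × Fin n) (Fin n × Fin n) ℂ) - hbar • Pmat n

/-- The R-matrix viewed as a matrix with entries in `End(H)` (acting as scalars on `H`). -/
def RmatE (n : ℕ) (hbar : ℂ) (H : Type*) [AddCommGroup H] [Module ℂ H] (u : ℂ) :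
    Matrix (Fin n × Fin n) (Fin n × Fin n) (Module.End ℂ H) :=
  (Rmat n hbar u).map (algebraMap ℂ (Module.End ℂ H))

/-- `X₁ = X ⊗ I`: an operator-valued matrix placed on the first auxiliary space. -/
def leg1 {R : Type*} [Semiring R] {n : ℕ} (X : Matrix (Fin n) (Fin n) R) :
    Matrix (Fin n × Fin n) (Fin n × Fin n) R :=
  fun p q => if p.2 = q.2 then X p.1 q.1 else 0

/-- `X₂ = I ⊗ X`: an operator-valued matrix placed on the second auxiliary space. -/
def leg2 {R : Type*} [Semiring R] {n : ℕ} (X : Matrix (Fin n) (Fin n) R) :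
    Matrix (Fin n × Fin n) (Fin n × Fin n) R :=
  fun p q => if p.1 = q.1 then X p.2 q.2 else 0

/-- The RTT relation: `R₁₂(u−v) T₁(u) T₂(v) = T₂(v) T₁(u) R₁₂(u−v)` on `ℂ^n ⊗ ℂ^n ⊗ H`. -/
def RTTrel (n : ℕ) (hbar : ℂ) (H : Type*) [AddCommGroup H] [Module ℂ H]
    (T : ℂ → Matrix (Fin n) (Fin n) (Module.End ℂ H)) : Prop :=
  ∀ u v : ℂ,
    RmatE n hbar H (u - v) * leg1 (T u) * leg2 (T v)
      = leg2 (T v) * leg1 (T u) * RmatE n hbar H (u - v)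

/-- The operator reflection equation on `ℂ^n ⊗ ℂ^n ⊗ H`. -/
def RefEq (n : ℕ) (hbar : ℂ) (H : Type*) [AddCommGroup H] [Module ℂ H]
    (D : ℂ → Matrix (Fin n) (Fin n) (Module.End ℂ H)) : Prop :=
  ∀ u₁ u₂ : ℂ,
    RmatE n hbar H (u₁ - u₂) * leg1 (D u₁) * RmatE n hbar H (u₁ + u₂) * leg2 (D u₂)
      = leg2 (D u₂) * RmatE n hbar H (u₁ + u₂) * leg1 (D u₁) * RmatE n hbar H (u₁ - u₂)


open scoped TensorProduct

section Legs

variable {R S : Type*} [Ring R] [Ring S] {n : ℕ}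

lemma leg1_mul (X Y : Matrix (Fin n) (Fin n) R) : leg1 (X * Y) = leg1 X * leg1 Y := by
  ext p q
  simp only [leg1, Matrix.mul_apply, Fintype.sum_prod_type]
  by_cases h : p.2 = q.2 <;> simp [h]

lemma leg2_mul (X Y : Matrix (Fin n) (Fin n) R) : leg2 (X * Y) = leg2 X * leg2 Y := by
  ext p q
  simp only [leg2, Matrix.mul_apply, Fintype.sum_prod_type_right]
  by_cases h : p.1 = q.1 <;> simp [h]

lemma leg1_one : leg1 (1 : Matrix (Fin n) (Fin n) R) = 1 := by
  ext p q
  simp only [leg1, Matrix.one_apply, Prod.ext_iff]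
  by_cases h : p.2 = q.2 <;> simp [h]

lemma leg2_one : leg2 (1 : Matrix (Fin n) (Fin n) R) = 1 := by
  ext p q
  simp only [leg2, Matrix.one_apply, Prod.ext_iff]
  by_cases h : p.1 = q.1 <;> simp [h]

lemma leg1_map (φ : R →+* S) (X : Matrix (Fin n) (Fin n) R) :
    (leg1 X).map φ = leg1 (X.map φ) := by
  ext p q
  simp [leg1, apply_ite φ]

lemma leg2_map (φ : R →+* S) (X : Matrix (Fin n) (Fin n) R) :
    (leg2 X).map φ = leg2 (X.map φ) := by
  ext p q
  simp [leg2, apply_ite φ]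

/-- Matrices on different auxiliary spaces commute as soon as their entries do. -/
lemma leg1_leg2_comm (X Y : Matrix (Fin n) (Fin n) R)
    (h : ∀ i j k l, X i j * Y k l = Y k l * X i j) :
    leg1 X * leg2 Y = leg2 Y * leg1 X := by
  ext ⟨p₁, p₂⟩ ⟨q₁, q₂⟩
  simp [leg1, leg2, Matrix.mul_apply, Fintype.sum_prod_type, h]

lemma leg1_swap (X : Matrix (Fin n) (Fin n) R) :
    (leg1 X).submatrix (Equiv.prodComm _ _) (Equiv.prodComm _ _) = leg2 X := rfl

lemma leg2_swap (X : Matrix (Fin n) (Fin n) R) :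
    (leg2 X).submatrix (Equiv.prodComm _ _) (Equiv.prodComm _ _) = leg1 X := rfl

end Legs

/-- `R₂₁(u) = R₁₂(u)`: the R-matrix is invariant under exchanging the auxiliary spaces. -/
lemma RmatE_swap (n : ℕ) (hbar : ℂ) (H : Type*) [AddCommGroup H] [Module ℂ H] (u : ℂ) :
    (RmatE n hbar H u).submatrix (Equiv.prodComm _ _) (Equiv.prodComm _ _) =
      RmatE n hbar H u := by
  ext1 ⟨p₁, p₂⟩ ⟨q₁, q₂⟩
  simp [RmatE, Rmat, Pmat, Matrix.one_apply, and_comm]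

lemma RmatE_map (n : ℕ) (hbar : ℂ) {H K : Type*} [AddCommGroup H] [Module ℂ H]
    [AddCommGroup K] [Module ℂ K] (φ : Module.End ℂ H →ₐ[ℂ] Module.End ℂ K) (u : ℂ) :
    (RmatE n hbar H u).map φ = RmatE n hbar K u := by
  ext1 p q
  simp only [RmatE, Matrix.map_apply, AlgHom.commutes]

/-- The RTT relation with the roles of the two auxiliary spaces exchanged. -/
lemma RTTrel.swap {n : ℕ} {hbar : ℂ} {H : Type*} [AddCommGroup H] [Module ℂ H]
    {T : ℂ → Matrix (Fin n) (Fin n) (Module.End ℂ H)} (h : RTTrel n hbar H T) (u v : ℂ) :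
    RmatE n hbar H (u - v) * leg2 (T u) * leg1 (T v)
      = leg1 (T v) * leg2 (T u) * RmatE n hbar H (u - v) := by
  have := congrArg
    (fun M => M.submatrix (Equiv.prodComm (Fin n) (Fin n)) (Equiv.prodComm (Fin n) (Fin n)))
    (h u v)
  simpa only [← Matrix.submatrix_mul_equiv _ _ _ (Equiv.prodComm (Fin n) (Fin n)),
    leg1_swap, leg2_swap, RmatE_swap] using this

lemma RTTrel.map {n : ℕ} {hbar : ℂ} {H K : Type*} [AddCommGroup H] [Module ℂ H]
    [AddCommGroup K] [Module ℂ K] (φ : Module.End ℂ H →ₐ[ℂ] Module.End ℂ K)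
    {T : ℂ → Matrix (Fin n) (Fin n) (Module.End ℂ H)} (h : RTTrel n hbar H T) :
    RTTrel n hbar K (fun u => (T u).map φ) := by
  intro u v
  have := congrArg (fun M => M.map (φ : Module.End ℂ H →+* Module.End ℂ K)) (h u v)
  simp only [Matrix.map_mul, leg1_map, leg2_map] at this
  simpa only [AlgHom.coe_toRingHom, RmatE_map] using this

lemma RefEq.map {n : ℕ} {hbar : ℂ} {H K : Type*} [AddCommGroup H] [Module ℂ H]
    [AddCommGroup K] [Module ℂ K] (φ : Module.End ℂ H →ₐ[ℂ] Module.End ℂ K)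
    {D : ℂ → Matrix (Fin n) (Fin n) (Module.End ℂ H)} (h : RefEq n hbar H D) :
    RefEq n hbar K (fun u => (D u).map φ) := by
  intro u v
  have := congrArg (fun M => M.map (φ : Module.End ℂ H →+* Module.End ℂ K)) (h u v)
  simp only [Matrix.map_mul, leg1_map, leg2_map] at this
  simpa only [AlgHom.coe_toRingHom, RmatE_map] using this

/-- Conjugating an exchange relation by the inverses `a'` of `a` and `b'` of `b`. -/
lemma exchange_inv {M : Type*} [Monoid M] {r a a' b b' : M} (ha : a * a' = 1) (ha' : a' * a = 1)
    (hb : b * b' = 1) (hb' : b' * b = 1) (h : r * b * a = a * b * r) :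
    r * a' * b' = b' * a' * r := by
  calc r * a' * b' = b' * (a' * a) * b * r * a' * b' := by simp [ha', hb']
    _ = b' * a' * (a * b * r) * a' * b' := by simp only [mul_assoc]
    _ = b' * a' * r * (b * (a * a') * b') := by rw [← h]; simp only [mul_assoc]
    _ = b' * a' * r := by simp [ha, hb]

/-- Moving a single inverse through an exchange relation. -/
lemma exchange_half {M : Type*} [Monoid M] {r a a' b : M} (ha : a * a' = 1) (ha' : a' * a = 1)
    (h : r * b * a = a * b * r) : a' * r * b = b * r * a' := by
  calc a' * r * b = a' * (r * b * a) * a' := by simp only [mul_assoc, ha, mul_one]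
    _ = (a' * a) * b * r * a' := by rw [h]; simp only [mul_assoc]
    _ = b * r * a' := by simp [ha']

/-- If the entries of `T` and `T'` commute with those of `D`, dressing a solution `D` of the
reflection equation to `T(u) D(u) T'(-u)` gives another solution. -/
lemma RefEq.dress {n : ℕ} {hbar : ℂ} {H : Type*} [AddCommGroup H] [Module ℂ H]
    {T T' D : ℂ → Matrix (Fin n) (Fin n) (Module.End ℂ H)}
    (hT : RTTrel n hbar H T) (hinv : ∀ u, T u * T' u = 1 ∧ T' u * T u = 1)
    (hD : RefEq n hbar H D)
    (hc : ∀ u v i j k l, T u i j * D v k l = D v k l * T u i j)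
    (hc' : ∀ u v i j k l, T' u i j * D v k l = D v k l * T' u i j) :
    RefEq n hbar H (fun u => T u * D u * T' (-u)) := by
  intro u₁ u₂
  have i1 (u) : leg1 (T u) * leg1 (T' u) = 1 := by rw [← leg1_mul, (hinv u).1, leg1_one]
  have i1' (u) : leg1 (T' u) * leg1 (T u) = 1 := by rw [← leg1_mul, (hinv u).2, leg1_one]
  have i2 (u) : leg2 (T u) * leg2 (T' u) = 1 := by rw [← leg2_mul, (hinv u).1, leg2_one]
  have i2' (u) : leg2 (T' u) * leg2 (T u) = 1 := by rw [← leg2_mul, (hinv u).2, leg2_one]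
  have e1 := hT u₁ u₂
  have e2 := exchange_half (i1 (-u₁)) (i1' (-u₁)) (hT.swap u₂ (-u₁))
  have e3 := exchange_half (i2 (-u₂)) (i2' (-u₂)) (hT u₁ (-u₂))
  have e4 := exchange_inv (i1 (-u₁)) (i1' (-u₁)) (i2 (-u₂)) (i2' (-u₂)) (hT.swap (-u₂) (-u₁))
  rw [show u₂ - -u₁ = u₁ + u₂ by ring] at e2
  rw [show u₁ - -u₂ = u₁ + u₂ by ring] at e3
  rw [show -u₂ - -u₁ = u₁ - u₂ by ring] at e4
  have c1 := leg1_leg2_comm (D u₁) (T u₂) fun i j k l => (hc _ _ _ _ _ _).symm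
  have c2 := leg1_leg2_comm (T' (-u₁)) (D u₂) fun i j k l => hc' _ _ _ _ _ _
  have c3 := leg1_leg2_comm (T u₁) (D u₂) fun i j k l => hc _ _ _ _ _ _
  have c4 := leg1_leg2_comm (D u₁) (T' (-u₂)) fun i j k l => (hc' _ _ _ _ _ _).symm
  have d := hD u₁ u₂
  simp only [leg1_mul, leg2_mul]
  generalize RmatE n hbar H (u₁ - u₂) = r at *
  generalize RmatE n hbar H (u₁ + u₂) = s at *
  generalize leg1 (T u₁) = a at *
  generalize leg2 (T u₂) = b at *
  generalize leg1 (T' (-u₁)) = a' at *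
  generalize leg2 (T' (-u₂)) = b' at *
  generalize leg1 (D u₁) = x at *
  generalize leg2 (D u₂) = y at *
  calc r * (a * x * a') * s * (b * y * b')
      = r * a * x * (a' * s * b) * y * b' := by simp only [mul_assoc]
    _ = r * a * (x * b) * s * (a' * y) * b' := by rw [e2]; simp only [mul_assoc]
    _ = (r * a * b) * x * s * y * a' * b' := by rw [c1, c2]; simp only [mul_assoc]
    _ = b * a * (r * x * s * y) * a' * b' := by rw [e1]; simp only [mul_assoc]
    _ = b * a * y * s * x * (r * a' * b') := by rw [d]; simp only [mul_assoc]
    _ = b * (a * y) * s * (x * b') * a' * r := by rw [e4]; simp only [mul_assoc]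
    _ = b * y * (a * s * b') * x * a' * r := by rw [c3, c4]; simp only [mul_assoc]
    _ = b * y * b' * s * (a * x * a') * r := by rw [← e3]; simp only [mul_assoc]


/-- coideal/comodule property: if T satisfies the RTT relation on H₁ with
pointwise inverse T', and D satisfies the operator reflection equation on H₂, then
D̃(u) = T₍₁₎(u)·D₍₂₎(u)·T₍₁₎'(−u), with entries
d̃_{ij}(u) = Σ_{a,b} t_{ia}(u)·t'_{bj}(−u) ⊗ d_{ab}(u), satisfies the operator
reflection equation on H₁ ⊗ H₂. -/
theorem coideal_reflection (n : ℕ) (hn : 2 ≤ n) (hbar : ℂ)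
    (H₁ H₂ : Type*) [AddCommGroup H₁] [Module ℂ H₁] [AddCommGroup H₂] [Module ℂ H₂]
    (T T' : ℂ → Matrix (Fin n) (Fin n) (Module.End ℂ H₁))
    (hRTT : RTTrel n hbar H₁ T)
    (hinv : ∀ u : ℂ, T u * T' u = 1 ∧ T' u * T u = 1)
    (D : ℂ → Matrix (Fin n) (Fin n) (Module.End ℂ H₂))
    (hD : RefEq n hbar H₂ D) :
    RefEq n hbar (H₁ ⊗[ℂ] H₂) (fun u =>
      Matrix.of fun i j => ∑ a : Fin n, ∑ b : Fin n,
        (TensorProduct.map (T u i a * T' (-u) b j) (D u a b) :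
          Module.End ℂ (H₁ ⊗[ℂ] H₂))) := by
  let φ : Module.End ℂ H₁ →ₐ[ℂ] Module.End ℂ (H₁ ⊗[ℂ] H₂) := Module.End.rTensorAlgHom ℂ H₁ H₂
  let ψ : Module.End ℂ H₂ →ₐ[ℂ] Module.End ℂ (H₁ ⊗[ℂ] H₂) := Module.End.lTensorAlgHom ℂ H₂ H₁
  have hφ (f) : φ f = TensorProduct.map f LinearMap.id := rfl
  have hψ (g) : ψ g = TensorProduct.map LinearMap.id g := rfl
  have comm (f g) : φ f * ψ g = ψ g * φ f := by
    rw [hφ, hψ, Module.End.mul_eq_comp, Module.End.mul_eq_comp, ← TensorProduct.map_comp,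
      ← TensorProduct.map_comp]
    rfl
  have inv (u : ℂ) : (T u).map φ * (T' u).map φ = 1 ∧ (T' u).map φ * (T u).map φ = 1 := by
    have h₁ := congrArg φ.mapMatrix (hinv u).1
    have h₂ := congrArg φ.mapMatrix (hinv u).2
    rw [map_mul, map_one] at h₁ h₂
    exact ⟨h₁, h₂⟩
  have key := RefEq.dress (hRTT.map φ) inv (hD.map ψ)
    (fun _ _ _ _ _ _ => comm _ _) (fun _ _ _ _ _ _ => comm _ _)
  convert key using 1
  funext u
  ext1 i j
  simp only [Matrix.of_apply, Matrix.mul_apply, Matrix.map_apply, Finset.sum_mul]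
  rw [Finset.sum_comm]
  refine Finset.sum_congr rfl fun b _ => Finset.sum_congr rfl fun a _ => ?_
  rw [mul_assoc, ← comm, ← mul_assoc, ← map_mul, hφ, hψ,
    Module.End.mul_eq_comp (TensorProduct.map _ _), ← TensorProduct.map_comp]
  rfl


end
end

section
/- (Commutativity of closed-chain transfer matrices.) Let H be a complex vector space and let T(u) = Σ_{i,j=1}^n E_{ij} ⊗ t_{ij}(u), t_{ij} : ℂ → End(H), satisfy the RTT relation. Define the transfer matrix t(u) = Σ_{i=1}^n t_{ii}(u) ∈ End(H). Then for all u, v ∈ ℂ with u − v ∉ {ħ, −ħ}, the transfer matrices commute: [t(u), t(v)] = 0. -/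
/-!
The matrix `R(w) = w - ħP` has scalar entries and satisfies `R(-w) R(w) = (ħ² - w²) I`, because
`P² = I` (`Rmat_neg_mul`). Multiplying the RTT relation at `w = u - v` by `R(-w)` on the left and
taking the trace over `ℂ^n ⊗ ℂ^n`, the factor `R(w)` on the right may be cycled to the front:
cyclicity of the trace holds over the noncommutative ring `End(H)` as soon as one of the two factors
has scalar entries (`trace_map_mul_comm`). This gives
`(ħ² - w²) tr(T₁(u) T₂(v)) = (ħ² - w²) tr(T₂(v) T₁(u))`. The traces are `t(u) t(v)` and `t(v) t(u)`,
and `ħ² - w² ≠ 0` since `w ≠ ±ħ`.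
-/

open Matrix
open scoped Kronecker

noncomputable section

theorem Pmat_mul_self (n : ℕ) : Pmat n * Pmat n = 1 := by
  ext ⟨a, b⟩ ⟨c, d⟩
  rw [Matrix.mul_apply, Finset.sum_eq_single (b, a)]
  · by_cases h : a = c <;> by_cases hh : b = d <;> simp [Pmat, Matrix.one_apply, h, hh]
  · rintro ⟨x, y⟩ - hxy
    have : ¬ (a = y ∧ b = x) := by
      rintro ⟨rfl, rfl⟩
      exact hxy rfl
    simp [Pmat, this]
  · simp

/-- Unitarity of the rational R-matrix, up to the scalar `ħ² - w²`. -/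
theorem Rmat_neg_mul (n : ℕ) (hbar w : ℂ) :
    Rmat n hbar (-w) * Rmat n hbar w = (hbar ^ 2 - w ^ 2) • 1 := by
  simp only [Rmat, sub_mul, mul_sub, smul_mul_assoc, mul_smul_comm, one_mul, mul_one,
    Pmat_mul_self]
  module

theorem Rmat_mul_neg (n : ℕ) (hbar w : ℂ) :
    Rmat n hbar w * Rmat n hbar (-w) = (hbar ^ 2 - w ^ 2) • 1 := by
  simpa using Rmat_neg_mul n hbar (-w)

/-- Cyclicity of the trace over a noncommutative algebra when one factor has scalar entries. -/
theorem trace_map_mul_comm {ι A : Type*} [Fintype ι] [Ring A] [Algebra ℂ A]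
    (M : Matrix ι ι ℂ) (X : Matrix ι ι A) :
    (M.map (algebraMap ℂ A) * X).trace = (X * M.map (algebraMap ℂ A)).trace := by
  simp only [Matrix.trace, Matrix.diag, Matrix.mul_apply, Matrix.map_apply]
  rw [Finset.sum_comm]
  simp only [Algebra.commutes]

theorem trace_leg1_mul_leg2 {A : Type*} [Semiring A] {n : ℕ} (X Y : Matrix (Fin n) (Fin n) A) :
    (leg1 X * leg2 Y).trace = (∑ i, X i i) * ∑ i, Y i i := by
  simp [Matrix.trace, Matrix.mul_apply, leg1, leg2, Fintype.sum_prod_type, Finset.sum_mul_sum]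

theorem trace_leg2_mul_leg1 {A : Type*} [Semiring A] {n : ℕ} (X Y : Matrix (Fin n) (Fin n) A) :
    (leg2 Y * leg1 X).trace = (∑ i, Y i i) * ∑ i, X i i := by
  rw [Finset.sum_mul_sum, Finset.sum_comm]
  simp [Matrix.trace, Matrix.mul_apply, leg1, leg2, Fintype.sum_prod_type]

/-- The scalar unitarity relation carried over to matrices with entries in `End(H)`. -/
theorem RmatE_mul_mul (n : ℕ) (hbar : ℂ) (H : Type*) [AddCommGroup H] [Module ℂ H] (w z : ℂ)
    (h : Rmat n hbar w * Rmat n hbar z = (hbar ^ 2 - w ^ 2) • 1)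
    (X : Matrix (Fin n × Fin n) (Fin n × Fin n) (Module.End ℂ H)) :
    RmatE n hbar H w * (RmatE n hbar H z * X) = (hbar ^ 2 - w ^ 2) • X := by
  have hmap : RmatE n hbar H w * RmatE n hbar H z = (hbar ^ 2 - w ^ 2) • 1 := by
    rw [RmatE, RmatE, ← Matrix.map_mul, h]
    ext1 p q
    by_cases hpq : p = q <;> simp [hpq, Algebra.algebraMap_eq_smul_one]
  rw [← mul_assoc, hmap, smul_mul_assoc, one_mul]

/-- commutativity of closed-chain transfer matrices
`t(u) = Σ_i t_{ii}(u)`: if T satisfies the RTT relation then `[t(u), t(v)] = 0`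
whenever `u − v ∉ {ħ, −ħ}`. -/
theorem transfer_commute (n : ℕ) (hn : 2 ≤ n) (hbar : ℂ)
    (H : Type*) [AddCommGroup H] [Module ℂ H]
    (T : ℂ → Matrix (Fin n) (Fin n) (Module.End ℂ H))
    (hRTT : RTTrel n hbar H T)
    (u v : ℂ) (h1 : u - v ≠ hbar) (h2 : u - v ≠ -hbar) :
    (∑ i : Fin n, T u i i) * (∑ i : Fin n, T v i i)
      = (∑ i : Fin n, T v i i) * (∑ i : Fin n, T u i i) := by
  have hc : hbar ^ 2 - (u - v) ^ 2 ≠ 0 := by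
    intro h
    rcases sq_eq_sq_iff_eq_or_eq_neg.mp (sub_eq_zero.mp h).symm with hh | hh
    · exact h1 hh
    · exact h2 hh
  have key := congrArg (fun X => (RmatE n hbar H (-(u - v)) * X).trace) (hRTT u v)
  simp only [mul_assoc (RmatE n hbar H (u - v))] at key
  rw [RmatE_mul_mul n hbar H _ _ (by rw [neg_sq, Rmat_neg_mul]), ← mul_assoc] at key
  -- Cycle the scalar-valued `R(u - v)` from the right end of the product to the left end.
  have hcyc := trace_map_mul_comm (Rmat n hbar (u - v))
    (RmatE n hbar H (-(u - v)) * (leg2 (T v) * leg1 (T u)))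
  rw [← RmatE] at hcyc
  rw [← hcyc, RmatE_mul_mul n hbar H _ _ (Rmat_mul_neg n hbar (u - v)), Matrix.trace_smul,
    Matrix.trace_smul, trace_leg1_mul_leg2, trace_leg2_mul_leg1, neg_sq] at key
  exact smul_right_injective _ hc key

end
end
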